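/- For every natural number n there exists a constant C > 0 such that for every ε ∈ [-1, 1] and every x ∈ ℝ³, the n-th iterated Fréchet derivative of the function m_ε : ℝ³ → ℝ, m_ε(x) := (1 + ε² + ε²‖x‖²)⁻², satisfies ‖D^n m_ε(x)‖ ≤ C. In particular, each m_ε is smooth with all derivatives bounded uniformly in ε ∈ [-1,1] and x ∈ ℝ³. -/

import Mathlib

/-!
Fix `ε` and a point `x₀`, and put `y = 1 + ε² + ε²‖x₀‖² ≥ 1`. Then
`m_ε = y⁻² • (g ∘ h)` with `g z = z⁻²` and `h x = (1 + ε² + ε²‖x‖²) / y`, so that `h x₀ = 1`.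
The derivatives of the quadratic function `h` at `x₀` have norms at most `2ε²‖x₀‖ / y ≤ 2`,
`2ε² / y ≤ 2`, and `0` from order three on; thus the `i`-th one is bounded by `2 ^ i`. The
derivatives of `g` are only evaluated at the single point `1`. The Faà di Bruno bound
`norm_iteratedFDeriv_comp_le'` therefore gives a constant depending on `n` alone.
The normalization by `y` is essential: without it the bound on the `n`-th derivative would
grow with `x₀` for large `n`.
-/

section Quadratic

variable {E : Type*} [NormedAddCommGroup E] [InnerProductSpace ℝ E]

lemma fderiv_const_add_mul_norm_sq (a b : ℝ) :
    fderiv ℝ (fun x : E => a + b * ‖x‖ ^ 2) = ⇑((2 * b) • innerSL ℝ (E := E)) := by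
  ext x v
  have h : HasFDerivAt (fun x : E => a + b * ‖x‖ ^ 2) (b • (2 • innerSL ℝ x)) x :=
    ((hasStrictFDerivAt_norm_sq x).hasFDerivAt.const_mul b).const_add a
  rw [h.fderiv]
  simp
  ring

lemma norm_iteratedFDeriv_const_add_mul_norm_sq_le {a b : ℝ} {x : E} (hb : 0 ≤ b) (hb1 : b ≤ 1)
    (hbx : b * ‖x‖ ≤ 1) {i : ℕ} (hi : 1 ≤ i) :
    ‖iteratedFDeriv ℝ i (fun x : E => a + b * ‖x‖ ^ 2) x‖ ≤ 2 ^ i := by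
  obtain ⟨k, rfl⟩ := Nat.exists_eq_add_of_le' hi
  rw [← norm_iteratedFDeriv_fderiv, fderiv_const_add_mul_norm_sq]
  rcases k with _ | k
  · rw [norm_iteratedFDeriv_zero, smul_apply, norm_smul, innerSL_apply_norm,
      Real.norm_of_nonneg (by positivity)]
    norm_num
    linarith
  rw [← norm_iteratedFDeriv_fderiv]
  have hconst : fderiv ℝ ⇑((2 * b) • innerSL ℝ (E := E)) =
      fun _ => (2 * b) • innerSL ℝ (E := E) := by
    ext1 v
    exact ContinuousLinearMap.fderiv _
  rw [hconst]
  rcases k with _ | k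
  · rw [norm_iteratedFDeriv_zero]
    refine ContinuousLinearMap.opNorm_le_bound _ (by positivity) fun v => ?_
    rw [smul_apply, norm_smul, innerSL_apply_norm, Real.norm_of_nonneg (by positivity)]
    gcongr
    norm_num
    linarith
  · rw [iteratedFDeriv_const_of_ne (by omega)]
    simp

end Quadratic

/-- For every `n` there is `C > 0` such that for all `ε ∈ [-1,1]` the
function `m_ε(x) = (1 + ε² + ε²‖x‖²)⁻²` on `ℝ³` is smooth and its `n`-th iterated Fréchet
derivative is bounded by `C`, uniformly in `ε` and `x`. -/
theorem stmt12 :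
    ∀ n : ℕ, ∃ C > (0 : ℝ), ∀ ε ∈ Set.Icc (-1 : ℝ) 1,
      ContDiff ℝ (⊤ : ℕ∞) (fun x : EuclideanSpace ℝ (Fin 3) =>
          ((1 + ε ^ 2 + ε ^ 2 * ‖x‖ ^ 2) ^ 2)⁻¹) ∧
        ∀ x : EuclideanSpace ℝ (Fin 3),
          ‖iteratedFDeriv ℝ n (fun x : EuclideanSpace ℝ (Fin 3) =>
              ((1 + ε ^ 2 + ε ^ 2 * ‖x‖ ^ 2) ^ 2)⁻¹) x‖ ≤ C := by
  intro n
  set g : ℝ → ℝ := fun z => (z ^ 2)⁻¹ with hg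
  have hgs : ContDiffOn ℝ (⊤ : ℕ∞) g (Set.Ioi 0) := by
    refine (contDiff_id.pow 2).contDiffOn.inv fun z hz => ?_
    exact pow_ne_zero 2 (ne_of_gt hz)
  set A : ℝ := ∑ i ∈ Finset.range (n + 1), ‖iteratedFDerivWithin ℝ i g (Set.Ioi 0) 1‖ with hA
  have hA0 : 0 ≤ A := Finset.sum_nonneg fun _ _ => norm_nonneg _
  have hgA : ∀ i ≤ n, ‖iteratedFDerivWithin ℝ i g (Set.Ioi 0) 1‖ ≤ A := fun i hi =>
    Finset.single_le_sum (f := fun i => ‖iteratedFDerivWithin ℝ i g (Set.Ioi 0) 1‖)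
      (fun _ _ => norm_nonneg _) (Finset.mem_range.2 (Nat.lt_succ_of_le hi))
  refine ⟨n.factorial * A * 2 ^ n + 1, by positivity, fun ε _ => ⟨?_, fun x₀ => ?_⟩⟩
  · refine ContDiff.inv ?_ fun x => by positivity
    exact (contDiff_const.add (contDiff_const.mul (contDiff_norm_sq ℝ))).pow 2
  set y : ℝ := 1 + ε ^ 2 + ε ^ 2 * ‖x₀‖ ^ 2 with hy
  have hy1 : 1 ≤ y := by rw [hy, add_assoc]; exact le_add_of_nonneg_right (by positivity)
  have hy0 : 0 < y := by linarith
  set h : EuclideanSpace ℝ (Fin 3) → ℝ :=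
    fun x => (1 + ε ^ 2) / y + ε ^ 2 / y * ‖x‖ ^ 2 with hh
  have hhs : ContDiff ℝ (⊤ : ℕ∞) h :=
    contDiff_const.add (contDiff_const.mul (contDiff_norm_sq ℝ))
  have hh1 : h x₀ = 1 := by
    simp only [hh]
    rw [div_mul_eq_mul_div, ← add_div, ← hy, div_self hy0.ne']
  have hmaps : Set.range h ⊆ Set.Ioi 0 := by
    rintro _ ⟨x, rfl⟩
    simp only [hh, Set.mem_Ioi]
    positivity
  have hfact : (fun x : EuclideanSpace ℝ (Fin 3) => ((1 + ε ^ 2 + ε ^ 2 * ‖x‖ ^ 2) ^ 2)⁻¹) =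
      (y ^ 2)⁻¹ • (g ∘ h) := by
    ext x
    have : 1 + ε ^ 2 + ε ^ 2 * ‖x‖ ^ 2 = y * h x := by
      simp only [hh]
      field_simp
    simp [this, hg, mul_pow, mul_comm]
  have hcomp : ‖iteratedFDeriv ℝ n (g ∘ h) x₀‖ ≤ n.factorial * A * 2 ^ n := by
    refine norm_iteratedFDeriv_comp_le' hmaps (isOpen_Ioi.uniqueDiffOn) hgs hhs
      (mod_cast le_top) x₀ ?_ ?_
    · intro i hi
      rw [hh1]
      exact hgA i hi
    · intro i hi _
      refine norm_iteratedFDeriv_const_add_mul_norm_sq_le (by positivity) ?_ ?_ hi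
      · rw [div_le_one hy0, hy]
        nlinarith [mul_nonneg (sq_nonneg ε) (sq_nonneg ‖x₀‖)]
      · rw [div_mul_eq_mul_div, div_le_one hy0, hy]
        -- `‖x₀‖ ≤ 1 + ‖x₀‖²`, multiplied by `ε²`.
        nlinarith [mul_nonneg (sq_nonneg ε) (show 0 ≤ 1 + ‖x₀‖ ^ 2 - ‖x₀‖ by
          nlinarith [sq_nonneg (‖x₀‖ - 1)])]
  have hghs : ContDiff ℝ (⊤ : ℕ∞) (g ∘ h) := hgs.comp_contDiff hhs fun x => hmaps ⟨x, rfl⟩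
  rw [hfact, iteratedFDeriv_const_smul_apply (hghs.of_le (mod_cast le_top)).contDiffAt, norm_smul,
    Real.norm_of_nonneg (by positivity)]
  have hle : (y ^ 2)⁻¹ ≤ 1 := inv_le_one_of_one_le₀ (one_le_pow₀ hy1)
  calc (y ^ 2)⁻¹ * ‖iteratedFDeriv ℝ n (g ∘ h) x₀‖
      ≤ 1 * (n.factorial * A * 2 ^ n) := by gcongr
    _ ≤ n.factorial * A * 2 ^ n + 1 := by linarith
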